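/- arXiv:2304.14169 — 2 statements merged into one kernel-verified Lean document; each statement's English description precedes it below -/
import Mathlib

section
/- For every m ∈ ℕ and every f ∈ F_d^log, the Fourier partial sum over the cube Λ = [-m, m]^d ∩ ℤ^d satisfies the uniform bound ‖f − P_Λ f‖_∞ ≤ 1/log(m+1); consequently, for every ε > 0, N^∞(ε, F_d^log) ≤ exp(2 d ε^{-1}), i.e., there is a finite index set Λ ⊂ ℤ^d with #Λ ≤ exp(2 d ε^{-1}) and sup_{f∈F_d^log} ‖f − P_Λ f‖_∞ ≤ ε. -/
open MeasureTheory Real Finset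

noncomputable section

/-- The unit cube `[0,1]^d`. -/
def cube (d : ℕ) : Set (Fin d → ℝ) := Set.univ.pi fun _ => Set.Icc 0 1

/-- The trigonometric character `e^{2πi⟨k,x⟩}`. -/
def eK (d : ℕ) (k : Fin d → ℤ) (x : Fin d → ℝ) : ℂ :=
  Complex.exp (2 * Real.pi * Complex.I * ∑ i, (k i : ℂ) * (x i : ℂ))

/-- The Fourier coefficient `f̂(k) = ∫_{[0,1]^d} f(x) e^{-2πi⟨k,x⟩} dx`. -/
def fCoeff (d : ℕ) (f : (Fin d → ℝ) → ℂ) (k : Fin d → ℤ) : ℂ :=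
  ∫ x in cube d, f x * Complex.exp (-(2 * Real.pi * Complex.I) * ∑ i, (k i : ℂ) * (x i : ℂ))

/-- `f` is 1-periodic in each coordinate. -/
def Periodic1 (d : ℕ) (f : (Fin d → ℝ) → ℂ) : Prop :=
  ∀ (x : Fin d → ℝ) (i : Fin d), f (Function.update x i (x i + 1)) = f x

/-- The weight `max(1, log ‖k‖_∞)`. -/
def logWeight (d : ℕ) (k : Fin d → ℤ) : ℝ :=
  max 1 (Real.log ((Finset.univ.sup fun i => (k i).natAbs : ℕ) : ℝ))

/-- The class `F_d^log` of continuous 1-periodic functions with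
`∑_k |f̂(k)| max(1, log ‖k‖_∞) ≤ 1`. -/
def FdLog (d : ℕ) : Set ((Fin d → ℝ) → ℂ) :=
  {f | Continuous f ∧ Periodic1 d f ∧
    Summable (fun k : Fin d → ℤ => ‖fCoeff d f k‖ * logWeight d k) ∧
    ∑' k : Fin d → ℤ, ‖fCoeff d f k‖ * logWeight d k ≤ 1}

/-- The cube of frequencies `[-m, m]^d ∩ ℤ^d`. -/
def boxZ (d m : ℕ) : Finset (Fin d → ℤ) :=
  Fintype.piFinset fun _ : Fin d => Finset.Icc (-(m : ℤ)) m

/-!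
The weight is at least `1`, so the Fourier coefficients of `f` are summable and `f`, viewed as a
continuous function on the torus, is everywhere the sum of its Fourier series. If the weight is at
least `c` off `Λ`, the omitted coefficients have total modulus at most `1 / c`. Off `[-m, m]^d` the
weight is at least `log (m + 1)`, which gives the first claim. For the second, put `t = ε⁻¹`: if
`t ≤ 1`, already `Λ = ∅` works because the weight is at least `1`; otherwise `m = ⌊e^t⌋` has
`log (m + 1) ≥ t` and `2 m + 1 ≤ 2 e^t + 1 ≤ e^(2 t)`.
-/

lemma norm_sub_sum_le_tsum_norm_mul_div {ι E : Type*} [SeminormedAddCommGroup E] {u : ι → E} {a : E}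
    (hu : HasSum u a) {w : ι → ℝ} (hw : ∀ k, 0 ≤ w k) (huw : Summable fun k => ‖u k‖ * w k)
    {s : Finset ι} {c : ℝ} (hc : 0 < c) (hcw : ∀ k ∉ s, c ≤ w k) :
    ‖a - ∑ k ∈ s, u k‖ ≤ (∑' k, ‖u k‖ * w k) / c := by
  have htail : HasSum (fun k : {k // k ∉ s} => u k) (a - ∑ k ∈ s, u k) :=
    s.hasSum_compl_iff.2 (by rwa [sub_add_cancel])
  have hbound : ∀ k : {k // k ∉ s}, ‖u k‖ ≤ ‖u k‖ * w k / c := fun k =>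
    (le_div_iff₀ hc).2 (mul_le_mul_of_nonneg_left (hcw k k.2) (norm_nonneg _))
  calc ‖a - ∑ k ∈ s, u k‖ ≤ (∑' k : {k // k ∉ s}, ‖u k‖ * w k) / c :=
        htail.norm_le_of_bounded ((huw.subtype {k | k ∉ s}).hasSum.div_const c) hbound
    _ ≤ (∑' k, ‖u k‖ * w k) / c := by
        gcongr
        exact huw.tsum_subtype_le _ {k | k ∉ s} fun k => mul_nonneg (norm_nonneg _) (hw k)

lemma periodic_sum {ι α β : Type*} [AddCommMonoid α] {f : α → β} {s : Finset ι} {c : ι → α}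
    (h : ∀ i ∈ s, Function.Periodic f (c i)) : Function.Periodic f (∑ i ∈ s, c i) :=
  Finset.sum_induction c (Function.Periodic f) (fun _ _ => Function.Periodic.add_period)
    (Function.periodic_with_period_zero f) h

/-- The covering map `ℝ^ι → (ℝ/ℤ)^ι`, along which periodic functions descend to the torus. -/
def torusProj (ι : Type*) : C(ι → ℝ, UnitAddTorus ι) where
  toFun x i := (x i : UnitAddCircle)

lemma isOpenQuotientMap_torusProj (ι : Type*) : IsOpenQuotientMap (torusProj ι) :=
  IsOpenQuotientMap.piMap fun _ => QuotientAddGroup.isOpenQuotientMap_mk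

lemma exists_eq_add_intCast_of_torusProj_eq {ι : Type*} {x y : ι → ℝ}
    (h : torusProj ι x = torusProj ι y) : ∃ n : ι → ℤ, y = x + fun i => (n i : ℝ) := by
  have hcoord (i : ι) : ∃ n : ℤ, y i = x i + n := by
    obtain ⟨n, hn⟩ := AddSubgroup.mem_zmultiples_iff.1 (QuotientAddGroup.eq.1 (congrFun h i))
    rw [zsmul_one] at hn
    exact ⟨n, by rw [hn, add_neg_cancel_left]⟩
  choose n hn using hcoord
  exact ⟨n, funext hn⟩

section

variable {d : ℕ} {f : (Fin d → ℝ) → ℂ}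

namespace Periodic1

lemma periodic_single (hf : Periodic1 d f) (i : Fin d) :
    Function.Periodic f (Pi.single i (1 : ℝ)) := fun x => by
  have hadd : x + Pi.single i 1 = Function.update x i (x i + 1) := by
    ext j
    obtain rfl | hj := eq_or_ne j i
    · simp
    · simp [hj]
  rw [hadd, hf x i]

lemma periodic_intCast (hf : Periodic1 d f) (n : Fin d → ℤ) :
    Function.Periodic f fun i => (n i : ℝ) := by
  have hsum : (fun i => (n i : ℝ)) = ∑ i, n i • Pi.single i (1 : ℝ) := by
    simp only [← Pi.single_smul, zsmul_one, Finset.univ_sum_single]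
  rw [hsum]
  exact periodic_sum fun i _ => (hf.periodic_single i).zsmul (n i)

lemma factorsThrough_torusProj (hf : Periodic1 d f) :
    Function.FactorsThrough f (torusProj (Fin d)) := fun x y hxy => by
  obtain ⟨n, rfl⟩ := exists_eq_add_intCast_of_torusProj_eq hxy
  exact (hf.periodic_intCast n x).symm

lemma exists_comp_torusProj_eq (hf : Periodic1 d f) (hc : Continuous f) :
    ∃ g : C(UnitAddTorus (Fin d), ℂ), ⇑g ∘ torusProj (Fin d) = f :=
  have hq := (isOpenQuotientMap_torusProj (Fin d)).isQuotientMap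
  ⟨hq.lift ⟨f, hc⟩ hf.factorsThrough_torusProj,
    congrArg DFunLike.coe (hq.lift_comp ⟨f, hc⟩ hf.factorsThrough_torusProj)⟩

end Periodic1

lemma mFourier_torusProj (k : Fin d → ℤ) (x : Fin d → ℝ) :
    UnitAddTorus.mFourier k (torusProj (Fin d) x) = eK d k x := by
  simp only [UnitAddTorus.mFourier, torusProj, ContinuousMap.coe_mk, fourier_coe_apply, eK,
    ← Complex.exp_sum, Finset.mul_sum]
  congr! 2 with i
  push_cast
  ring

lemma norm_eK (k : Fin d → ℤ) (x : Fin d → ℝ) : ‖eK d k x‖ = 1 := by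
  have hexp : eK d k x = Complex.exp ((2 * Real.pi * ∑ i, k i * x i : ℝ) * Complex.I) := by
    rw [eK]
    push_cast
    ring_nf
  rw [hexp, Complex.norm_exp_ofReal_mul_I]

lemma cube_ae_eq_pi_Ioc (d : ℕ) :
    cube d =ᵐ[volume] {x : Fin d → ℝ | ∀ i, x i ∈ Set.Ioc (0 : ℝ) (0 + 1)} := by
  have hpi : {x : Fin d → ℝ | ∀ i, x i ∈ Set.Ioc (0 : ℝ) (0 + 1)} =
      Set.univ.pi fun _ => Set.Ioc 0 1 := by
    simp only [zero_add, Set.pi, Set.mem_univ, forall_const]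
  rw [hpi]
  exact Measure.pi_Ioc_ae_eq_pi_Icc.symm

lemma fCoeff_comp_torusProj (g : UnitAddTorus (Fin d) → ℂ) (k : Fin d → ℤ) :
    fCoeff d (g ∘ torusProj (Fin d)) k = UnitAddTorus.mFourierCoeff g k := by
  rw [UnitAddTorus.mFourierCoeff_eq_integral g k 0, fCoeff,
    setIntegral_congr_set (cube_ae_eq_pi_Ioc d)]
  congr! 2 with x
  have hneg : Complex.exp (-(2 * Real.pi * Complex.I) * ∑ i, (k i : ℂ) * (x i : ℂ)) =
      UnitAddTorus.mFourier (-k) (torusProj (Fin d) x) := by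
    simp [mFourier_torusProj, eK]
  rw [hneg, mul_comm]
  rfl

lemma hasSum_fCoeff_mul_eK (hc : Continuous f) (hp : Periodic1 d f) (hs : Summable (fCoeff d f))
    (x : Fin d → ℝ) : HasSum (fun k => fCoeff d f k * eK d k x) (f x) := by
  obtain ⟨g, rfl⟩ := hp.exists_comp_torusProj_eq hc
  have hcoeff : fCoeff d (g ∘ torusProj (Fin d)) = UnitAddTorus.mFourierCoeff g :=
    funext (fCoeff_comp_torusProj g)
  simpa only [hcoeff, ← mFourier_torusProj, smul_eq_mul, Function.comp_apply] using
    UnitAddTorus.hasSum_mFourier_series_apply_of_summable (hcoeff ▸ hs) (torusProj (Fin d) x)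

lemma one_le_logWeight (k : Fin d → ℤ) : 1 ≤ logWeight d k :=
  le_max_left _ _

lemma norm_sub_sum_le_of_mem_FdLog (hf : f ∈ FdLog d) {Λ : Finset (Fin d → ℤ)} {c : ℝ} (hc : 0 < c)
    (hΛ : ∀ k ∉ Λ, c ≤ logWeight d k) (x : Fin d → ℝ) :
    ‖f x - ∑ k ∈ Λ, fCoeff d f k * eK d k x‖ ≤ 1 / c := by
  obtain ⟨hcont, hper, hsum, hle⟩ := hf
  have hcoeff : Summable (fCoeff d f) := .of_norm_bounded hsum fun k =>
    le_mul_of_one_le_right (norm_nonneg _) (one_le_logWeight k)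
  have hnorm (k : Fin d → ℤ) : ‖fCoeff d f k * eK d k x‖ = ‖fCoeff d f k‖ := by
    rw [norm_mul, norm_eK, mul_one]
  calc ‖f x - ∑ k ∈ Λ, fCoeff d f k * eK d k x‖
      ≤ (∑' k, ‖fCoeff d f k * eK d k x‖ * logWeight d k) / c :=
        norm_sub_sum_le_tsum_norm_mul_div (hasSum_fCoeff_mul_eK hcont hper hcoeff x)
          (fun k => zero_le_one.trans (one_le_logWeight k)) (by simpa only [hnorm] using hsum) hc hΛ
    _ ≤ 1 / c := by
        simp only [hnorm]
        gcongr

lemma log_add_one_le_logWeight {m : ℕ} {k : Fin d → ℤ} (hk : k ∉ boxZ d m) :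
    Real.log (m + 1) ≤ logWeight d k := by
  simp only [boxZ, Fintype.mem_piFinset, not_forall, Finset.mem_Icc] at hk
  obtain ⟨i, hi⟩ := hk
  have hsup : m + 1 ≤ Finset.univ.sup fun i => (k i).natAbs :=
    le_trans (by omega) (Finset.le_sup (f := fun i => (k i).natAbs) (Finset.mem_univ i))
  exact le_max_of_le_right (Real.log_le_log (by positivity) (by exact_mod_cast hsup))

lemma card_boxZ (d m : ℕ) : (boxZ d m).card = (2 * m + 1) ^ d := by
  rw [boxZ, Fintype.card_piFinset_const, Int.card_Icc]
  congr 1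
  omega

lemma le_log_floor_exp_add_one (t : ℝ) : t ≤ Real.log (⌊Real.exp t⌋₊ + 1) :=
  (Real.le_log_iff_exp_le (by positivity)).2 (Nat.lt_floor_add_one _).le

lemma two_mul_exp_add_one_le {t : ℝ} (ht : 1 ≤ t) : 2 * Real.exp t + 1 ≤ Real.exp (2 * t) := by
  have he : 2.7 ≤ Real.exp t := by
    linarith [Real.exp_one_gt_d9, Real.exp_le_exp.2 ht]
  rw [two_mul t, Real.exp_add]
  nlinarith

lemma card_boxZ_floor_exp_le (d : ℕ) {t : ℝ} (ht : 1 ≤ t) :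
    ((boxZ d ⌊Real.exp t⌋₊).card : ℝ) ≤ Real.exp (2 * d * t) := by
  have hfloor : (⌊Real.exp t⌋₊ : ℝ) ≤ Real.exp t := Nat.floor_le (Real.exp_pos t).le
  calc ((boxZ d ⌊Real.exp t⌋₊).card : ℝ) = (2 * ⌊Real.exp t⌋₊ + 1) ^ d := by
        rw [card_boxZ]
        push_cast
        rfl
    _ ≤ (2 * Real.exp t + 1) ^ d := by gcongr
    _ ≤ Real.exp (2 * t) ^ d := by gcongr; exact two_mul_exp_add_one_le ht
    _ = Real.exp (2 * d * t) := by rw [← Real.exp_nat_mul]; ring_nf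

end

/-- for every `m ≥ 1` and every `f ∈ F_d^log`, the Fourier partial sum
over `Λ = [-m,m]^d` satisfies `‖f − P_Λ f‖_∞ ≤ 1/log(m+1)`; consequently, for every
`ε > 0` there is a finite `Λ ⊂ ℤ^d` with `#Λ ≤ exp(2dε⁻¹)` and
`sup_{f ∈ F_d^log} ‖f − P_Λ f‖_∞ ≤ ε`. -/
theorem statement5 :
    (∀ (d m : ℕ), 1 ≤ m → ∀ f ∈ FdLog d, ∀ x : Fin d → ℝ,
      ‖f x - ∑ k ∈ boxZ d m, fCoeff d f k * eK d k x‖ ≤ 1 / Real.log ((m : ℝ) + 1)) ∧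
    (∀ (d : ℕ) (ε : ℝ), 1 ≤ d → 0 < ε →
      ∃ Λ : Finset (Fin d → ℤ), (Λ.card : ℝ) ≤ Real.exp (2 * d * ε⁻¹) ∧
        ∀ f ∈ FdLog d, ∀ x : Fin d → ℝ,
          ‖f x - ∑ k ∈ Λ, fCoeff d f k * eK d k x‖ ≤ ε) := by
  refine ⟨fun d m hm f hf x => ?_, fun d ε _ hε => ?_⟩
  · have hlog : 0 < Real.log ((m : ℝ) + 1) := Real.log_pos (by norm_cast; omega)
    exact norm_sub_sum_le_of_mem_FdLog hf hlog (fun k => log_add_one_le_logWeight) x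
  rcases le_total 1 ε with hε1 | hε1
  · refine ⟨∅, by simpa using Real.exp_nonneg _, fun f hf x => ?_⟩
    exact (norm_sub_sum_le_of_mem_FdLog hf one_pos (fun k _ => one_le_logWeight k) x).trans
      (by rwa [div_one])
  · refine ⟨boxZ d ⌊Real.exp ε⁻¹⌋₊, card_boxZ_floor_exp_le d ((one_le_inv₀ hε).2 hε1),
      fun f hf x => ?_⟩
    have hweight : ∀ k ∉ boxZ d ⌊Real.exp ε⁻¹⌋₊, ε⁻¹ ≤ logWeight d k := fun k hk =>
      (le_log_floor_exp_add_one ε⁻¹).trans (log_add_one_le_logWeight hk)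
    simpa only [one_div, inv_inv] using norm_sub_sum_le_of_mem_FdLog hf (inv_pos.2 hε) hweight x
end
end

section
/- For any m, n ∈ ℕ with m > n and any linear map T_n : ℂ^m → ℂ^m of rank at most n, there exists x ∈ ℂ^m with ‖x‖₁ ≤ 1 such that ‖x − T_n x‖₂ ≥ ((m − n)/m)^{1/2}. -/
open Finset

/-!
For a subspace `K` of dimension `k` in an `m`-dimensional inner product space, the squared distances
to `K` of the vectors of an orthonormal basis sum to the trace of the orthogonal projection onto
`Kᗮ`, that is, to `m - k`. Hence some basis vector lies at squared distance at least `(m - k) / m`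
from `K`. The standard basis vectors lie in the `ℓ¹` unit ball; take `K` to be the range of `T`.
-/

section OrthonormalBasis

variable {𝕜 E ι : Type*} [RCLike 𝕜] [NormedAddCommGroup E] [InnerProductSpace 𝕜 E] [Fintype ι]

theorem trace_starProjection [FiniteDimensional 𝕜 E] (K : Submodule 𝕜 E) :
    LinearMap.trace 𝕜 E K.starProjection.toLinearMap = Module.finrank 𝕜 K :=
  LinearMap.IsProj.trace
    ⟨K.starProjection_apply_mem, fun _ hx ↦ K.starProjection_eq_self_iff.mpr hx⟩

theorem sum_norm_sq_starProjection [FiniteDimensional 𝕜 E] (b : OrthonormalBasis ι 𝕜 E)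
    (K : Submodule 𝕜 E) : ∑ i, ‖K.starProjection (b i)‖ ^ 2 = Module.finrank 𝕜 K := by
  have inner_eq_norm_sq (x : E) :
      inner 𝕜 x (K.starProjection x) = (‖K.starProjection x‖ : 𝕜) ^ 2 := by
    rw [← inner_self_eq_norm_sq_to_K, K.inner_starProjection_left_eq_right,
      K.starProjection_eq_self_iff.mpr (K.starProjection_apply_mem x)]
  have sum_inner := LinearMap.trace_eq_sum_inner K.starProjection.toLinearMap b
  simp only [trace_starProjection, ContinuousLinearMap.coe_coe, inner_eq_norm_sq] at sum_inner
  exact_mod_cast sum_inner.symm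

theorem norm_starProjection_orthogonal_le_norm_sub (K : Submodule 𝕜 E) [K.HasOrthogonalProjection]
    (x : E) {y : E} (hy : y ∈ K) : ‖Kᗮ.starProjection x‖ ≤ ‖x - y‖ :=
  calc ‖Kᗮ.starProjection x‖ = ‖Kᗮ.starProjection (x - y)‖ := by
        rw [map_sub, K.starProjection_orthogonal_apply_eq_zero hy, sub_zero]
    _ ≤ ‖x - y‖ := Kᗮ.norm_starProjection_apply_le _

theorem exists_forall_mem_div_card_le_norm_sub_sq [Nonempty ι] (b : OrthonormalBasis ι 𝕜 E)
    (K : Submodule 𝕜 E) :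
    ∃ i, ∀ y ∈ K,
      ((Fintype.card ι : ℝ) - Module.finrank 𝕜 K) / Fintype.card ι ≤ ‖b i - y‖ ^ 2 := by
  have : FiniteDimensional 𝕜 E := b.toBasis.finiteDimensional_of_finite
  have finrank_add : (Module.finrank 𝕜 K : ℝ) + Module.finrank 𝕜 Kᗮ = Fintype.card ι := by
    exact_mod_cast K.finrank_add_finrank_orthogonal.trans (Module.finrank_eq_card_basis b.toBasis)
  have average_le_sum : ∑ _i : ι, ((Fintype.card ι : ℝ) - Module.finrank 𝕜 K) / Fintype.card ι ≤
      ∑ i, ‖Kᗮ.starProjection (b i)‖ ^ 2 := by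
    rw [sum_norm_sq_starProjection, sum_const, card_univ, nsmul_eq_mul,
      mul_div_cancel₀ _ (by simp), ← finrank_add, add_sub_cancel_left]
  obtain ⟨i, -, hi⟩ := exists_le_of_sum_le univ_nonempty average_le_sum
  refine ⟨i, fun y hy ↦ hi.trans ?_⟩
  gcongr
  exact norm_starProjection_orthogonal_le_norm_sub K (b i) hy

end OrthonormalBasis

theorem statement14_general {𝕜 ι : Type*} [RCLike 𝕜] [Fintype ι] {n : ℕ} (hn : n < Fintype.card ι)
    (W : Submodule 𝕜 (ι → 𝕜)) (hW : Module.finrank 𝕜 W ≤ n) :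
    ∃ x : ι → 𝕜,
      (∑ j, ‖x j‖) ≤ 1 ∧
      ∀ y ∈ W, √(((Fintype.card ι : ℝ) - n) / Fintype.card ι) ≤ √(∑ j, ‖x j - y j‖ ^ 2) := by
  classical
  have : Nonempty ι := Fintype.card_pos_iff.mp (Nat.zero_lt_of_lt hn)
  let e := (WithLp.linearEquiv 2 𝕜 (ι → 𝕜)).symm
  have finrank_le : Module.finrank 𝕜 (W.map e.toLinearMap) ≤ n :=
    (LinearEquiv.finrank_map_eq e W).trans_le hW
  obtain ⟨i, hi⟩ := exists_forall_mem_div_card_le_norm_sub_sq (EuclideanSpace.basisFun ι 𝕜)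
    (W.map e.toLinearMap)
  refine ⟨Pi.single i 1, ?_, fun y hy ↦ Real.sqrt_le_sqrt ?_⟩
  · simp [Pi.single_apply, apply_ite norm]
  · calc ((Fintype.card ι : ℝ) - n) / Fintype.card ι
        ≤ (Fintype.card ι - Module.finrank 𝕜 (W.map e.toLinearMap)) / Fintype.card ι := by gcongr
      _ ≤ ‖EuclideanSpace.basisFun ι 𝕜 i - e y‖ ^ 2 := hi _ (Submodule.mem_map_of_mem hy)
      _ = ∑ j, ‖(Pi.single i 1 : ι → 𝕜) j - y j‖ ^ 2 := by
        simp [EuclideanSpace.norm_sq_eq, e, Pi.single_apply]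

/-- the result \eqref{eq:Glus} of Gluskin: for `m > n` and any linear
map `T : ℂ^m → ℂ^m` of rank at most `n`, there is `x ∈ ℂ^m` with `‖x‖₁ ≤ 1` and
`‖x − Tx‖₂ ≥ ((m−n)/m)^{1/2}`. -/
theorem statement14 :
    ∀ (m n : ℕ), n < m →
      ∀ T : (Fin m → ℂ) →ₗ[ℂ] (Fin m → ℂ),
        Module.rank ℂ (LinearMap.range T) ≤ n →
        ∃ x : Fin m → ℂ,
          (∑ j, ‖x j‖) ≤ 1 ∧
          Real.sqrt (((m : ℝ) - n) / m) ≤ Real.sqrt (∑ j, ‖x j - T x j‖ ^ 2) := by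
  intro m n hmn T hT
  obtain ⟨x, hx, far⟩ := statement14_general (ι := Fin m) (by simpa using hmn) (LinearMap.range T)
    (Module.finrank_le_of_rank_le hT)
  exact ⟨x, hx, by simpa using far (T x) (LinearMap.mem_range_self T x)⟩
end
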